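/- arXiv:1805.09442 — 7 statements merged into one kernel-verified Lean document; each statement's English description precedes it below -/
import Mathlib

section
/- Let u, v ∈ ℝ³ be unit vectors with |⟨u, v⟩| < 1 (i.e., u and v are not parallel). Then for every h ∈ ℝ³, ‖u × h‖² + ‖v × h‖² ≥ (1 − |⟨u, v⟩|)·‖h‖². In particular, the symmetric matrix Q_uᵀQ_u + Q_vᵀQ_v is positive definite, with smallest eigenvalue at least 1 − |⟨u, v⟩| (which equals 2 sin²(θ/2) when the angle θ between u and v lies in (0, π/2]). -/
/-!
By Lagrange's identity, `‖u × h‖² = ‖h‖² - ⟨u, h⟩²` for a unit vector `u`, so the inequality is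
equivalent to the Bessel-type bound `⟨u, h⟩² + ⟨v, h⟩² ≤ (1 + |⟨u, v⟩|) ‖h‖²`
(`inner_sq_add_inner_sq_le`). With `c = ⟨u, v⟩`, the latter follows by expanding
`0 ≤ ‖(1 + |c|) h - ⟨u, h⟩ u - ⟨v, h⟩ v‖²`, bounding the cross term by
`2 ⟨u, h⟩ ⟨v, h⟩ c ≤ |c| (⟨u, h⟩² + ⟨v, h⟩²)` and dividing by `1 + |c|`.
The quadratic form of `Q_uᵀ Q_u + Q_vᵀ Q_v` at `h` is `‖u × h‖² + ‖v × h‖²`, so positive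
definiteness follows from `1 - |c| > 0`.
-/

open Matrix

/-- The frame operator `h ↦ ⟨u, h⟩ u + ⟨v, h⟩ v` of two unit vectors is bounded above by
`1 + |⟨u, v⟩|`, its largest eigenvalue. -/
theorem inner_sq_add_inner_sq_le (u v h : Fin 3 → ℝ)
    (hu : ∑ i, u i ^ 2 = 1) (hv : ∑ i, v i ^ 2 = 1) :
    (∑ i, u i * h i) ^ 2 + (∑ i, v i * h i) ^ 2 ≤
      (1 + |∑ i, u i * v i|) * ∑ i, h i ^ 2 := by
  set c := ∑ i, u i * v i with hc
  set a := ∑ i, u i * h i with ha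
  set b := ∑ i, v i * h i with hb
  set H := ∑ i, h i ^ 2 with hH
  have hk : 0 < 1 + |c| := by positivity
  have hexp : ∑ i, ((1 + |c|) * h i - a * u i - b * v i) ^ 2 =
      (1 + |c|) ^ 2 * H - 2 * (1 + |c|) * (a ^ 2 + b ^ 2) + a ^ 2 + b ^ 2 + 2 * (a * b * c) := by
    have key : ∀ k : ℝ, ∑ i, (k * h i - a * u i - b * v i) ^ 2 =
        k ^ 2 * H - 2 * k * (a * a + b * b) + a ^ 2 * ∑ i, u i ^ 2 + b ^ 2 * ∑ i, v i ^ 2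
          + 2 * (a * b * c) := by
      intro k
      have e : ∀ a' b' : ℝ, ∑ i, (k * h i - a' * u i - b' * v i) ^ 2 =
          k ^ 2 * H - 2 * k * (a' * a + b' * b) + a' ^ 2 * ∑ i, u i ^ 2
            + b' ^ 2 * ∑ i, v i ^ 2 + 2 * (a' * b' * c) := by
        intro a' b'
        simp only [hc, ha, hb, hH, Fin.sum_univ_three]
        ring
      exact e a b
    rw [key, hu, hv]
    ring
  have hnonneg : 0 ≤ ∑ i, ((1 + |c|) * h i - a * u i - b * v i) ^ 2 :=
    Finset.sum_nonneg fun i _ => sq_nonneg _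
  have hcross : 2 * (a * b * c) ≤ |c| * (a ^ 2 + b ^ 2) := by
    rcases abs_cases c with ⟨h1, h2⟩ | ⟨h1, h2⟩ <;> rw [h1]
    · nlinarith [mul_nonneg h2 (sq_nonneg (a - b))]
    · nlinarith [mul_nonneg (neg_nonneg.2 h2.le) (sq_nonneg (a + b))]
  have hmul : 0 ≤ (1 + |c|) * ((1 + |c|) * H - (a ^ 2 + b ^ 2)) := by
    linarith
  linarith [nonneg_of_mul_nonneg_right hmul hk]

/-- Lagrange's identity for a unit vector. -/
theorem sum_crossProduct_sq (u h : Fin 3 → ℝ) (hu : ∑ i, u i ^ 2 = 1) :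
    ∑ i, (crossProduct u h) i ^ 2 = ∑ i, h i ^ 2 - (∑ i, u i * h i) ^ 2 := by
  rw [← one_mul (∑ i, h i ^ 2), ← hu]
  simp [cross_apply, Fin.sum_univ_three]
  ring

theorem cross_lower_bound (u v : Fin 3 → ℝ)
    (hu : ∑ i, u i ^ 2 = 1) (hv : ∑ i, v i ^ 2 = 1) (h : Fin 3 → ℝ) :
    (1 - |∑ i, u i * v i|) * ∑ i, h i ^ 2 ≤
      (∑ i, (crossProduct u h) i ^ 2) + ∑ i, (crossProduct v h) i ^ 2 := by
  rw [sum_crossProduct_sq u h hu, sum_crossProduct_sq v h hv]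
  linarith [inner_sq_add_inner_sq_le u v h hu hv]

/-- **Lemma 4.6 (corrected form).** For unit vectors `u, v ∈ ℝ³` that are not
parallel (`|⟨u,v⟩| < 1`), every `h ∈ ℝ³` satisfies
`‖u × h‖² + ‖v × h‖² ≥ (1 − |⟨u,v⟩|)·‖h‖²`; in particular the symmetric matrix
`Q_uᵀQ_u + Q_vᵀQ_v` is positive definite with smallest eigenvalue at least
`1 − |⟨u,v⟩|`. -/
theorem stmt_2 (u v : Fin 3 → ℝ) (hu : ∑ i, u i ^ 2 = 1) (hv : ∑ i, v i ^ 2 = 1)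
    (huv : |∑ i, u i * v i| < 1) :
    (∀ h : Fin 3 → ℝ,
        (1 - |∑ i, u i * v i|) * ∑ i, h i ^ 2 ≤
          (∑ i, (crossProduct u h) i ^ 2) + ∑ i, (crossProduct v h) i ^ 2) ∧
      ((Matrix.of ![![0, -u 2, u 1], ![u 2, 0, -u 0], ![-u 1, u 0, 0]] :
              Matrix (Fin 3) (Fin 3) ℝ)ᵀ *
            Matrix.of ![![0, -u 2, u 1], ![u 2, 0, -u 0], ![-u 1, u 0, 0]] +
          (Matrix.of ![![0, -v 2, v 1], ![v 2, 0, -v 0], ![-v 1, v 0, 0]] :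
              Matrix (Fin 3) (Fin 3) ℝ)ᵀ *
            Matrix.of ![![0, -v 2, v 1], ![v 2, 0, -v 0], ![-v 1, v 0, 0]]).PosDef := by
  refine ⟨cross_lower_bound u v hu hv, Matrix.PosDef.of_dotProduct_mulVec_pos ?_ ?_⟩
  · ext i j
    fin_cases i <;> fin_cases j <;>
      simp [Matrix.mul_apply, Fin.sum_univ_three] <;> ring
  · intro x hx
    have hpos : 0 < ∑ i, x i ^ 2 := by
      obtain ⟨i, hi⟩ := Function.ne_iff.1 hx
      exact Finset.sum_pos' (fun i _ => sq_nonneg _) ⟨i, Finset.mem_univ i, sq_pos_of_ne_zero hi⟩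
    have hlt := (mul_pos (sub_pos.2 huv) hpos).trans_le (cross_lower_bound u v hu hv x)
    refine hlt.trans_eq ?_
    simp [cross_apply, Matrix.mulVec, dotProduct, Matrix.mul_apply, Fin.sum_univ_three]
    ring
end

section
/- Let k ≥ 2 be a natural number and let d₁, …, d_k ∈ ℝ³ be unit vectors. Then there exists a unit vector d ∈ ℝ³ such that for every i with 1 ≤ i ≤ k, 1/(10k) ≤ |⟨d, d_i⟩| ≤ 1 − 1/(10k). -/
/-!
The bad directions are covered by volume. If `x` lies in the unit ball and its direction fails the
lower bound for `dᵢ`, then, in an orthonormal basis starting with `dᵢ`, the point `x` lies in the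
box with half-sides `(t, 1, 1)`, where `t = 1 / (10k)`. If it fails the upper bound, its two
coordinates orthogonal to `dᵢ` satisfy `y² + z² = ‖x‖² - ⟪x, dᵢ⟫² ≤ 1 - (1 - t)² ≤ 2t`, so it lies
in the box with half-sides `(1, √(2t), √(2t))`. These boxes have volumes `8t` and `16t`, and the
`2k` of them have total volume at most `24kt = 2.4`, less than the volume `4π/3` of the ball. Hence
some `x` in the ball avoids them all; every box contains `0`, so `x` can be normalised.
-/

open scoped RealInnerProductSpace

open MeasureTheory

/-- The closed box centred at `0` with half-side `r j` along the `j`-th vector of an orthonormal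
basis. -/
def orthoBox (b : OrthonormalBasis (Fin 3) ℝ (EuclideanSpace ℝ (Fin 3))) (r : Fin 3 → ℝ) :
    Set (EuclideanSpace ℝ (Fin 3)) :=
  {x | ∀ j, |⟪b j, x⟫| ≤ r j}

lemma volume_orthoBox (b : OrthonormalBasis (Fin 3) ℝ (EuclideanSpace ℝ (Fin 3)))
    (r : Fin 3 → ℝ) : volume (orthoBox b r) = ∏ j, ENNReal.ofReal (2 * r j) := by
  have hmp := (EuclideanSpace.volume_preserving_symm_measurableEquiv_toLp (Fin 3)).comp
    b.measurePreserving_repr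
  have hset : orthoBox b r =
      ((MeasurableEquiv.toLp 2 (Fin 3 → ℝ)).symm ∘ b.repr) ⁻¹' Set.Icc (-r) r := by
    ext x
    simp only [orthoBox, Set.mem_ofPred_eq, Set.mem_preimage, Function.comp_apply, Set.mem_Icc,
      Pi.le_def, abs_le, ← forall_and]
    refine forall_congr' fun j => ?_
    rw [← b.repr_apply_apply x j]
    rfl
  rw [hset, hmp.measure_preimage measurableSet_Icc.nullMeasurableSet, Real.volume_Icc_pi]
  refine Finset.prod_congr rfl fun j _ => ?_
  congr 1
  simp only [Pi.neg_apply]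
  ring

lemma exists_orthonormalBasis_zero_eq (v : EuclideanSpace ℝ (Fin 3)) (hv : ‖v‖ = 1) :
    ∃ b : OrthonormalBasis (Fin 3) ℝ (EuclideanSpace ℝ (Fin 3)), b 0 = v := by
  have ho : Orthonormal ℝ (({0} : Set (Fin 3)).domRestrict fun _ => v) := by
    refine ⟨fun _ => hv, fun i j hij => ?_⟩
    exact absurd (Subsingleton.elim i j) hij
  obtain ⟨b, hb⟩ := ho.exists_orthonormalBasis_extension_of_card_eq (by simp)
  exact ⟨b, hb 0 rfl⟩

theorem stmt_6 (k : ℕ) (hk : 2 ≤ k) (d : Fin k → EuclideanSpace ℝ (Fin 3))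
    (hd : ∀ i, ‖d i‖ = 1) :
    ∃ e : EuclideanSpace ℝ (Fin 3), ‖e‖ = 1 ∧
      ∀ i, 1 / (10 * (k : ℝ)) ≤ |⟪e, d i⟫| ∧ |⟪e, d i⟫| ≤ 1 - 1 / (10 * (k : ℝ)) := by
  choose b hb using fun i => exists_orthonormalBasis_zero_eq (d i) (hd i)
  have hk' : (2 : ℝ) ≤ k := by exact_mod_cast hk
  set t : ℝ := 1 / (10 * (k : ℝ)) with ht
  have ht0 : 0 < t := by positivity
  have hkt : k * t = 1 / 10 := by rw [ht]; field_simp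
  have ht1 : t ≤ 1 := by nlinarith
  set s : ℝ := √(2 * t) with hs
  have hs0 : 0 ≤ s := Real.sqrt_nonneg _
  have hss : s * s = 2 * t := Real.mul_self_sqrt (by positivity)
  let B : Fin k → Set (EuclideanSpace ℝ (Fin 3)) := fun i =>
    orthoBox (b i) ![t, 1, 1] ∪ orthoBox (b i) ![1, s, s]
  have hB : ∀ i, volume (B i) ≤ ENNReal.ofReal (24 * t) := by
    intro i
    refine (measure_union_le _ _).trans ?_
    rw [volume_orthoBox, volume_orthoBox,
      ← ENNReal.ofReal_prod_of_nonneg, ← ENNReal.ofReal_prod_of_nonneg, ← ENNReal.ofReal_add]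
    · apply ENNReal.ofReal_le_ofReal
      simp only [Fin.prod_univ_three, Matrix.cons_val]
      nlinarith
    · simp only [Fin.prod_univ_three, Matrix.cons_val]; positivity
    · simp only [Fin.prod_univ_three, Matrix.cons_val]; positivity
    · intro j _; fin_cases j <;> simp [hs0]
    · intro j _; fin_cases j <;> simp [ht0.le]
  have hlt : volume (⋃ i, B i) < volume (Metric.ball (0 : EuclideanSpace ℝ (Fin 3)) 1) := by
    calc volume (⋃ i, B i) ≤ ∑ i, volume (B i) := measure_iUnion_fintype_le _ _
      _ ≤ ∑ _i : Fin k, ENNReal.ofReal (24 * t) := Finset.sum_le_sum fun i _ => hB i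
      _ = ENNReal.ofReal (k * (24 * t)) := by
        rw [Finset.sum_const, Finset.card_univ, Fintype.card_fin, nsmul_eq_mul,
          ENNReal.ofReal_mul (p := (k : ℝ)) (Nat.cast_nonneg k), ENNReal.ofReal_natCast]
      _ < ENNReal.ofReal (Real.pi * 4 / 3) := by
        rw [ENNReal.ofReal_lt_ofReal_iff (by positivity)]
        linarith [Real.pi_gt_three]
      _ = volume (Metric.ball (0 : EuclideanSpace ℝ (Fin 3)) 1) := by
        rw [EuclideanSpace.volume_ball_fin_three]
        simp
  obtain ⟨x, hx, hxB⟩ : ∃ x ∈ Metric.ball (0 : EuclideanSpace ℝ (Fin 3)) 1, x ∉ ⋃ i, B i := by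
    by_contra! h
    exact absurd (measure_mono h) (not_le.mpr hlt)
  simp only [Set.mem_iUnion, not_exists] at hxB
  have hx1 : ‖x‖ < 1 := by simpa using hx
  have hx0 : x ≠ 0 := by
    rintro rfl
    refine hxB ⟨0, by omega⟩ (Or.inl fun j => ?_)
    fin_cases j <;> simp [ht0.le]
  have hxpos : 0 < ‖x‖ := norm_pos_iff.mpr hx0
  refine ⟨‖x‖⁻¹ • x, by simp [norm_smul, hxpos.ne'], fun i => ?_⟩
  have hcoord : ∀ j, |⟪b i j, x⟫| ≤ 1 := fun j => by
    have := abs_real_inner_le_norm (b i j) x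
    rw [(b i).norm_eq_one, one_mul] at this
    linarith
  have hparseval := (b i).sum_sq_norm_inner_right x
  simp only [Fin.sum_univ_three, Real.norm_eq_abs] at hparseval
  have hab : |⟪‖x‖⁻¹ • x, d i⟫| = |⟪b i 0, x⟫| / ‖x‖ := by
    rw [real_inner_smul_left, abs_mul, abs_inv, abs_norm, hb, real_inner_comm, div_eq_inv_mul]
  rw [hab, le_div_iff₀ hxpos, div_le_iff₀ hxpos]
  constructor
  · by_contra! h
    have h' : |⟪b i 0, x⟫| ≤ t := by nlinarith
    refine hxB i (Or.inl fun j => ?_)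
    fin_cases j
    · exact h'
    · exact hcoord 1
    · exact hcoord 2
  · by_contra! h
    have hsum : |⟪b i 1, x⟫| ^ 2 + |⟪b i 2, x⟫| ^ 2 ≤ s ^ 2 := by
      have h1 : ((1 - t) * ‖x‖) ^ 2 ≤ |⟪b i 0, x⟫| ^ 2 :=
        pow_le_pow_left₀ (mul_nonneg (by linarith) hxpos.le) h.le 2
      have h2 : ‖x‖ ^ 2 ≤ 1 := pow_le_one₀ hxpos.le hx1.le
      have h3 : 2 * t * ‖x‖ ^ 2 ≤ 2 * t := by nlinarith
      have h4 : 0 ≤ t ^ 2 * ‖x‖ ^ 2 := by positivity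
      nlinarith
    have h1 : |⟪b i 1, x⟫| ≤ s :=
      abs_le_of_sq_le_sq (by rw [← sq_abs]; nlinarith [sq_nonneg |⟪b i 2, x⟫|]) hs0
    have h2 : |⟪b i 2, x⟫| ≤ s :=
      abs_le_of_sq_le_sq (by rw [← sq_abs]; nlinarith [sq_nonneg |⟪b i 1, x⟫|]) hs0
    refine hxB i (Or.inr fun j => ?_)
    fin_cases j
    · exact hcoord 0
    · exact h1
    · exact h2
end

section
/- Let σ denote the 2-dimensional Hausdorff measure on ℝ³ and let S² be the unit sphere centered at the origin in ℝ³. Let k ≥ 2 be a natural number and let d₁, …, d_k ∈ ℝ³ be unit vectors. Then σ({d ∈ S² : for all i, 1/(10k) ≤ |⟨d, d_i⟩| ≤ 1 − 1/(10k)}) ≥ (4/5)·σ(S²). -/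
/-!
By the union bound it is enough that, for one unit vector `e`, the directions `x` violating
`1/(10k) ≤ |⟪x, e⟫| ≤ 1 - 1/(10k)` make up at most the proportion `1/(5k)` of the sphere. This
follows from the Archimedes hat-box theorem: `|⟪x, e⟫| ≤ t` holds on exactly the proportion `t` of the
sphere (`hausdorff_band`), so the equatorial band accounts for `1/(10k)`, and so do
the two polar caps taken together.

The hat-box theorem for the Hausdorff measure is reduced to a volume computation by a Fubini
argument, which avoids any surface parametrization beyond showing that the sphere has finite
measure (`hausdorff_sphere_lt_top`). The set of pairs `(x, y)` in `S² × B³` with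
`|⟪x, y⟫| ≤ t ‖y‖` has slices of constant measure in both directions, because both the Hausdorff
and the Lebesgue measure are invariant under rotations. Equating the two iterated integrals shows
that the band has the same proportion in `S²` as the cone `|⟪x, y⟫| ≤ t ‖y‖` has in `B³`. The
latter is `t`, by integrating the areas of its annular slices (`volume_cone_axis`).
-/

open MeasureTheory
open scoped ENNReal
open scoped RealInnerProductSpace

/-- Finiteness is seen from spherical coordinates, a smooth, hence Lipschitz, map from a compact
square onto the sphere. -/
theorem hausdorff_sphere_lt_top :
    μH[2] (Metric.sphere (0 : EuclideanSpace ℝ (Fin 3)) 1) < ∞ := by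
  let f : (Fin 2 → ℝ) → EuclideanSpace ℝ (Fin 3) := fun p =>
    !₂[Real.sin (p 0) * Real.cos (p 1), Real.sin (p 0) * Real.sin (p 1), Real.cos (p 0)]
  have hf : ContDiff ℝ 1 f := by
    rw [contDiff_euclidean]
    intro i
    fin_cases i <;> simp [f] <;> fun_prop
  let K : Set (Fin 2 → ℝ) := Set.Icc (fun _ => -Real.pi) (fun _ => Real.pi)
  have hK : IsCompact K := isCompact_Icc
  obtain ⟨C, hC⟩ := (hf.locallyLipschitz.locallyLipschitzOn (s := K)
    ).exists_lipschitzOnWith_of_compact hK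
  have hsub : Metric.sphere (0 : EuclideanSpace ℝ (Fin 3)) 1 ⊆ f '' K := by
    intro x hx
    have hx1 : x 0 ^ 2 + x 1 ^ 2 + x 2 ^ 2 = 1 := by
      have h : ‖x‖ = 1 := by simpa using hx
      have := EuclideanSpace.real_norm_sq_eq x
      rw [h, Fin.sum_univ_three] at this
      linarith
    -- The longitude of `x` is the argument of its horizontal part, seen as a complex number.
    let w : ℂ := ⟨x 0, x 1⟩
    have hw : ‖w‖ = Real.sin (Real.arccos (x 2)) := by
      rw [Real.sin_arccos, Complex.norm_def, Complex.normSq_apply]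
      congr 1
      simp only [w]
      linarith
    refine ⟨![Real.arccos (x 2), w.arg], ?_, ?_⟩
    · constructor <;> intro i <;> fin_cases i <;> simp
      · linarith [Real.arccos_nonneg (x 2), Real.pi_pos]
      · exact (Complex.neg_pi_lt_arg w).le
      · exact Real.arccos_le_pi _
      · exact Complex.arg_le_pi w
    · ext i
      fin_cases i
      · simp only [f]
        simp [← hw, Complex.norm_mul_cos_arg, w]
      · simp only [f]
        simp [← hw, Complex.norm_mul_sin_arg, w]
      · simp only [f]
        simpa using Real.cos_arccos (by nlinarith [sq_nonneg (x 0), sq_nonneg (x 1)])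
          (by nlinarith [sq_nonneg (x 0), sq_nonneg (x 1)])
  refine (measure_mono hsub).trans_lt ((hC.hausdorffMeasure_image_le (by norm_num)).trans_lt ?_)
  have : (μH[2] : Measure (Fin 2 → ℝ)) = volume := by
    have := hausdorffMeasure_pi_real (ι := Fin 2)
    simpa using this
  rw [this]
  exact ENNReal.mul_lt_top (by simp) hK.measure_lt_top

/-- The slice at height `z` of the part of the unit ball of `ℝ × ℝ²` near the equator is an
annulus with squared radii `z² (1 - t²) / t²` and `1 - z²`. For `|z| > t` the slice is empty, and
`ENNReal.ofReal` truncates the right-hand side to `0`. -/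
theorem volume_cone_slice {t : ℝ} (ht0 : 0 < t) (ht1 : t < 1) (z : ℝ) :
    volume {w : EuclideanSpace ℝ (Fin 2) | z ^ 2 + ‖w‖ ^ 2 < 1 ∧
      z ^ 2 ≤ t ^ 2 * (z ^ 2 + ‖w‖ ^ 2)} = ENNReal.ofReal (Real.pi * (1 - z ^ 2 / t ^ 2)) := by
  have ht2 : 0 < t ^ 2 := by positivity
  have ht3 : t ^ 2 < 1 := by nlinarith
  by_cases hz : z ^ 2 ≤ t ^ 2
  · have ha : 0 ≤ z ^ 2 * (1 - t ^ 2) / t ^ 2 :=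
      div_nonneg (mul_nonneg (sq_nonneg z) (by linarith)) ht2.le
    have hb : 0 ≤ 1 - z ^ 2 := by linarith
    have hset : {w : EuclideanSpace ℝ (Fin 2) | z ^ 2 + ‖w‖ ^ 2 < 1 ∧
        z ^ 2 ≤ t ^ 2 * (z ^ 2 + ‖w‖ ^ 2)} =
        Metric.ball 0 √(1 - z ^ 2) \ Metric.ball 0 √(z ^ 2 * (1 - t ^ 2) / t ^ 2) := by
      ext w
      simp only [Set.mem_ofPred_eq, Set.mem_sdiff, mem_ball_zero_iff, not_lt]
      rw [Real.lt_sqrt (norm_nonneg w), Real.sqrt_le_left (norm_nonneg w), div_le_iff₀ ht2]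
      constructor <;> rintro ⟨h1, h2⟩ <;> constructor <;> linarith
    have hle : z ^ 2 * (1 - t ^ 2) / t ^ 2 ≤ 1 - z ^ 2 := by
      rw [div_le_iff₀ ht2]; nlinarith
    rw [hset, measure_sdiff (Metric.ball_subset_ball (Real.sqrt_le_sqrt hle))
      measurableSet_ball.nullMeasurableSet measure_ball_lt_top.ne,
      EuclideanSpace.volume_ball_fin_two, EuclideanSpace.volume_ball_fin_two,
      ← ENNReal.ofReal_pow (Real.sqrt_nonneg _), ← ENNReal.ofReal_pow (Real.sqrt_nonneg _),
      Real.sq_sqrt ha, Real.sq_sqrt hb, ← ENNReal.ofReal_mul hb, ← ENNReal.ofReal_mul ha,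
      ← ENNReal.ofReal_sub _ (by positivity)]
    congr 1
    field_simp
    ring
  · have hset : {w : EuclideanSpace ℝ (Fin 2) | z ^ 2 + ‖w‖ ^ 2 < 1 ∧
        z ^ 2 ≤ t ^ 2 * (z ^ 2 + ‖w‖ ^ 2)} = ∅ := by
      ext w
      simp only [Set.mem_ofPred_eq, Set.mem_empty_iff_false, iff_false, not_and, not_le]
      intro h
      nlinarith
    have : 1 ≤ z ^ 2 / t ^ 2 := by rw [le_div_iff₀ ht2]; linarith
    rw [hset, measure_empty, ENNReal.ofReal_of_nonpos]
    nlinarith [Real.pi_pos]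

/-- The slice areas integrate to `t` times `4π/3`, the volume of the unit ball. -/
theorem lintegral_slice {t : ℝ} (ht0 : 0 < t) :
    ∫⁻ z : ℝ, ENNReal.ofReal (Real.pi * (1 - z ^ 2 / t ^ 2)) =
      ENNReal.ofReal (t * (Real.pi * 4 / 3)) := by
  have hsupp : ∫⁻ z : ℝ, ENNReal.ofReal (Real.pi * (1 - z ^ 2 / t ^ 2)) =
      ∫⁻ z in Set.Ioc (-t) t, ENNReal.ofReal (Real.pi * (1 - z ^ 2 / t ^ 2)) := by
    refine (setLIntegral_eq_of_support_subset ?_).symm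
    intro z hz
    rw [Function.mem_support] at hz
    have h1 : 0 < Real.pi * (1 - z ^ 2 / t ^ 2) := by
      by_contra h
      exact hz (ENNReal.ofReal_of_nonpos (not_lt.1 h))
    have h2 : z ^ 2 / t ^ 2 < 1 := by linarith [(mul_pos_iff_of_pos_left Real.pi_pos).1 h1]
    rw [div_lt_one (by positivity)] at h2
    have := abs_lt.1 (abs_lt_of_sq_lt_sq h2 ht0.le)
    exact ⟨this.1, this.2.le⟩
  rw [hsupp, ← ofReal_integral_eq_lintegral_ofReal]
  · rw [← intervalIntegral.integral_of_le (by linarith)]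
    congr 1
    rw [intervalIntegral.integral_const_mul, intervalIntegral.integral_sub (by simp)
      (by apply Continuous.intervalIntegrable; fun_prop), intervalIntegral.integral_div]
    simp
    field_simp
    ring
  · exact (Continuous.integrableOn_Icc (by fun_prop)).mono_set Set.Ioc_subset_Icc_self
  · refine (ae_restrict_iff' measurableSet_Ioc).2 (ae_of_all _ fun z hz => ?_)
    have : z ^ 2 / t ^ 2 ≤ 1 := by
      rw [div_le_one (by positivity)]
      exact sq_le_sq' hz.1.le hz.2
    exact mul_nonneg Real.pi_pos.le (by linarith)

/-- The theorem of Archimedes in solid form: the points of the unit ball at latitude at most `arcsin t`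
occupy the proportion `t` of its volume. -/
theorem volume_cone_axis {t : ℝ} (ht0 : 0 < t) (ht1 : t < 1) :
    volume {y : EuclideanSpace ℝ (Fin 3) | ‖y‖ < 1 ∧ |y 0| ≤ t * ‖y‖} =
      ENNReal.ofReal t * volume (Metric.ball (0 : EuclideanSpace ℝ (Fin 3)) 1) := by
  let g : EuclideanSpace ℝ (Fin 3) → ℝ × EuclideanSpace ℝ (Fin 2) := fun y =>
    (y 0, WithLp.toLp 2 fun j => y j.succ)
  have hg : MeasurePreserving g volume volume := by
    have h1 := EuclideanSpace.volume_preserving_symm_measurableEquiv_toLp (Fin 3)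
    have h2 := volume_preserving_piFinSuccAbove (fun _ : Fin 3 => ℝ) 0
    have h3 := (MeasurePreserving.id (volume : Measure ℝ)).prod
      (PiLp.volume_preserving_toLp (Fin 2))
    exact h3.comp (h2.comp h1)
  let S : Set (ℝ × EuclideanSpace ℝ (Fin 2)) :=
    {p | p.1 ^ 2 + ‖p.2‖ ^ 2 < 1 ∧ p.1 ^ 2 ≤ t ^ 2 * (p.1 ^ 2 + ‖p.2‖ ^ 2)}
  have hS : MeasurableSet S :=
    (measurableSet_lt (f := fun p : ℝ × EuclideanSpace ℝ (Fin 2) => p.1 ^ 2 + ‖p.2‖ ^ 2)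
      (g := fun _ => (1 : ℝ)) (by fun_prop) (by fun_prop)).inter
      (measurableSet_le (f := fun p : ℝ × EuclideanSpace ℝ (Fin 2) => p.1 ^ 2)
        (g := fun p => t ^ 2 * (p.1 ^ 2 + ‖p.2‖ ^ 2)) (by fun_prop) (by fun_prop))
  have hpre : {y : EuclideanSpace ℝ (Fin 3) | ‖y‖ < 1 ∧ |y 0| ≤ t * ‖y‖} = g ⁻¹' S := by
    ext y
    have hn : ‖y‖ ^ 2 = (g y).1 ^ 2 + ‖(g y).2‖ ^ 2 := by
      rw [EuclideanSpace.real_norm_sq_eq, EuclideanSpace.real_norm_sq_eq, Fin.sum_univ_succ]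
    simp only [Set.mem_ofPred_eq, Set.mem_preimage, S, ← hn]
    refine and_congr ?_ ?_
    · rw [sq_lt_one_iff₀ (norm_nonneg y)]
    · rw [← mul_pow, sq_le_sq, abs_of_nonneg (by positivity : 0 ≤ t * ‖y‖)]
  rw [hpre, hg.measure_preimage hS.nullMeasurableSet, Measure.volume_eq_prod,
    Measure.prod_apply hS]
  have : ∀ z, volume (Prod.mk z ⁻¹' S) = ENNReal.ofReal (Real.pi * (1 - z ^ 2 / t ^ 2)) :=
    fun z => volume_cone_slice ht0 ht1 z
  simp_rw [this]
  rw [lintegral_slice ht0, EuclideanSpace.volume_ball_fin_three, ENNReal.ofReal_mul ht0.le]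
  simp

theorem exists_rotation {u v : EuclideanSpace ℝ (Fin 3)} (h : ‖u‖ = ‖v‖) :
    ∃ R : EuclideanSpace ℝ (Fin 3) ≃ₗᵢ[ℝ] EuclideanSpace ℝ (Fin 3), R u = v :=
  ⟨_, Submodule.reflection_sub h⟩

/-- Rotation invariance of Lebesgue measure carries `volume_cone_axis` over to any axis `x`. -/
theorem volume_cone {t : ℝ} (ht0 : 0 < t) (ht1 : t < 1) {x : EuclideanSpace ℝ (Fin 3)}
    (hx : ‖x‖ = 1) :
    volume {y : EuclideanSpace ℝ (Fin 3) | ‖y‖ < 1 ∧ |⟪x, y⟫| ≤ t * ‖y‖} =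
      ENNReal.ofReal t * volume (Metric.ball (0 : EuclideanSpace ℝ (Fin 3)) 1) := by
  obtain ⟨R, hR⟩ := exists_rotation (u := x) (v := EuclideanSpace.single 0 1) (by simp [hx])
  rw [← volume_cone_axis ht0 ht1,
    ← R.measurePreserving.measure_preimage_emb R.toHomeomorph.measurableEmbedding
      {y | ‖y‖ < 1 ∧ |y 0| ≤ t * ‖y‖}]
  congr 1
  ext y
  have : (R y) 0 = ⟪x, y⟫ := by
    rw [← R.inner_map_map x y, hR, EuclideanSpace.inner_single_left]
    simp
  simp [this]

/-- The band on the unit sphere around the great circle orthogonal to `y`, of half-height `t`. The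
factor `‖y‖` makes the band depend only on the direction of `y` when `y ≠ 0`. -/
def sphereBand (t : ℝ) (y : EuclideanSpace ℝ (Fin 3)) : Set (EuclideanSpace ℝ (Fin 3)) :=
  {x | x ∈ Metric.sphere 0 1 ∧ |⟪x, y⟫| ≤ t * ‖y‖}

theorem hausdorff_band_eq {t : ℝ} {y e : EuclideanSpace ℝ (Fin 3)} (hy : y ≠ 0) (he : ‖e‖ = 1) :
    μH[2] (sphereBand t y) = μH[2] (sphereBand t e) := by
  have hy_pos : 0 < ‖y‖ := norm_pos_iff.2 hy
  obtain ⟨R, hR⟩ := exists_rotation (u := y) (v := ‖y‖ • e) (by simp [norm_smul, he])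
  rw [← (R.toIsometryEquiv.measurePreserving_hausdorffMeasure 2).measure_preimage_emb
    R.toHomeomorph.measurableEmbedding (sphereBand t e)]
  congr 1
  ext x
  have : ⟪x, y⟫ = ‖y‖ * ⟪R x, e⟫ := by
    rw [← R.inner_map_map x y, hR, inner_smul_right]
  simp only [sphereBand, Set.mem_ofPred_eq, Set.mem_preimage, this, abs_mul, abs_norm, he, mul_one,
    mem_sphere_zero_iff_norm, LinearIsometryEquiv.coe_toIsometryEquiv, R.norm_map]
  rw [mul_comm t, mul_le_mul_iff_right₀ hy_pos]

/-- The Archimedes hat-box theorem for the Hausdorff measure: a band of half-height `t` occupies the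
proportion `t` of the sphere. The set of pairs `(x, y)` in `S² × B³` with `|⟪x, y⟫| ≤ t ‖y‖` is
measured by slicing along either coordinate. -/
theorem hausdorff_band {t : ℝ} (ht0 : 0 < t) (ht1 : t < 1) {e : EuclideanSpace ℝ (Fin 3)}
    (he : ‖e‖ = 1) :
    μH[2] (sphereBand t e) =
      ENNReal.ofReal t * μH[2] (Metric.sphere (0 : EuclideanSpace ℝ (Fin 3)) 1) := by
  let μ : Measure (EuclideanSpace ℝ (Fin 3)) := μH[2].restrict (Metric.sphere 0 1)
  let ν : Measure (EuclideanSpace ℝ (Fin 3)) := volume.restrict (Metric.ball 0 1)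
  have : IsFiniteMeasure μ := ⟨by simpa [μ] using hausdorff_sphere_lt_top⟩
  let T : Set (EuclideanSpace ℝ (Fin 3) × EuclideanSpace ℝ (Fin 3)) := {p | |⟪p.1, p.2⟫| ≤ t * ‖p.2‖}
  have hT : MeasurableSet T := by
    refine (isClosed_le ?_ ?_).measurableSet <;> fun_prop
  have h1 : (μ.prod ν) T =
      ENNReal.ofReal t * volume (Metric.ball (0 : EuclideanSpace ℝ (Fin 3)) 1) *
        μH[2] (Metric.sphere (0 : EuclideanSpace ℝ (Fin 3)) 1) := by
    rw [Measure.prod_apply hT, setLIntegral_congr_fun (g := fun _ =>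
      ENNReal.ofReal t * volume (Metric.ball (0 : EuclideanSpace ℝ (Fin 3)) 1)) Metric.isClosed_sphere.measurableSet]
    · simp
    · intro x hx
      simp only
      rw [← volume_cone ht0 ht1 (mem_sphere_zero_iff_norm.1 hx),
        Measure.restrict_apply (measurable_prodMk_left hT)]
      congr 1
      ext y
      simp [T, and_comm]
  have h2 : (μ.prod ν) T = μH[2] (sphereBand t e) * volume (Metric.ball (0 : EuclideanSpace ℝ (Fin 3)) 1) := by
    rw [Measure.prod_apply_symm hT, lintegral_congr_ae (g := fun _ => μH[2] (sphereBand t e))]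
    · simp [ν]
    -- At `y = 0` the slice is the whole sphere, so this holds only almost everywhere.
    · refine ae_restrict_of_ae ?_
      filter_upwards [Measure.ae_ne volume (0 : EuclideanSpace ℝ (Fin 3))] with y hy
      rw [← hausdorff_band_eq hy he, Measure.restrict_apply (measurable_prodMk_right hT)]
      congr 1
      ext x
      simp [T, sphereBand, and_comm]
  have h3 : volume (Metric.ball (0 : EuclideanSpace ℝ (Fin 3)) 1) ≠ 0 := (Metric.measure_ball_pos _ _ one_pos).ne'
  have h4 : volume (Metric.ball (0 : EuclideanSpace ℝ (Fin 3)) 1) ≠ ∞ := measure_ball_lt_top.ne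
  rw [← ENNReal.mul_left_inj h3 h4, ← h2, h1]
  ring

/-- The directions violating the constraint for a single vector `e` form a band and a pair of polar
caps; the band and the pair of caps each have proportion `1/(10k)` of the sphere. -/
theorem hausdorff_compl_le {k : ℕ} (hk : 2 ≤ k) {e : EuclideanSpace ℝ (Fin 3)}
    (he : ‖e‖ = 1) :
    μH[2] {x : EuclideanSpace ℝ (Fin 3) | x ∈ Metric.sphere (0 : EuclideanSpace ℝ (Fin 3)) 1 ∧
        ¬ (1 / (10 * (k : ℝ)) ≤ |⟪x, e⟫| ∧ |⟪x, e⟫| ≤ 1 - 1 / (10 * (k : ℝ)))} ≤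
      ENNReal.ofReal (1 / (5 * (k : ℝ))) *
        μH[2] (Metric.sphere (0 : EuclideanSpace ℝ (Fin 3)) 1) := by
  set ε : ℝ := 1 / (10 * (k : ℝ)) with hε
  have hk' : (2 : ℝ) ≤ k := by exact_mod_cast hk
  have hε0 : 0 < ε := by positivity
  have hε1 : ε < 1 := by
    rw [hε, div_lt_one (by positivity)]; linarith
  have hm : MeasurableSet (sphereBand (1 - ε) e) := by
    refine Metric.isClosed_sphere.measurableSet.inter
      (measurableSet_le (f := fun x => |⟪x, e⟫|) ?_ ?_) <;> fun_prop
  have hs : sphereBand (1 - ε) e ⊆ Metric.sphere 0 1 := fun x hx => hx.1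
  have hcap : μH[2] (Metric.sphere 0 1 \ sphereBand (1 - ε) e) =
      ENNReal.ofReal ε * μH[2] (Metric.sphere (0 : EuclideanSpace ℝ (Fin 3)) 1) := by
    have hfin := hausdorff_sphere_lt_top.ne
    rw [measure_sdiff hs hm.nullMeasurableSet (measure_ne_top_of_subset hs hfin),
      hausdorff_band (by linarith) (by linarith) he]
    nth_rw 1 [← one_mul (μH[2] (Metric.sphere (0 : EuclideanSpace ℝ (Fin 3)) 1))]
    rw [← ENNReal.sub_mul fun _ _ => hfin, ← ENNReal.ofReal_one,
      ← ENNReal.ofReal_sub _ (by linarith), sub_sub_cancel]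
  calc _ ≤ μH[2] (sphereBand ε e ∪ (Metric.sphere 0 1 \ sphereBand (1 - ε) e)) := by
        refine measure_mono ?_
        rintro x ⟨hx, h⟩
        by_cases h1 : ε ≤ |⟪x, e⟫|
        · exact Or.inr ⟨hx, fun h2 => h ⟨h1, by simpa [he] using h2.2⟩⟩
        · exact Or.inl ⟨hx, by simpa [he] using (not_le.1 h1).le⟩
    _ ≤ _ := measure_union_le _ _
    _ = _ := by
        rw [hcap, hausdorff_band hε0 hε1 he, ← add_mul, ← ENNReal.ofReal_add hε0.le hε0.le]
        congr 2
        rw [hε]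
        field_simp
        norm_num

/-- Probabilistic form of the direction-selection lemma (Section 6.2): for
`k ≥ 2` unit vectors `d₁, …, d_k ∈ ℝ³`, the set of unit directions `d ∈ S²`
with `1/(10k) ≤ |⟨d, dᵢ⟩| ≤ 1 − 1/(10k)` for all `i` has 2-dimensional
Hausdorff measure at least `(4/5)·σ(S²)`. -/
theorem stmt_7 (k : ℕ) (hk : 2 ≤ k) (d : Fin k → EuclideanSpace ℝ (Fin 3))
    (hd : ∀ i, ‖d i‖ = 1) :
    (4 / 5 : ℝ≥0∞) * μH[2] (Metric.sphere (0 : EuclideanSpace ℝ (Fin 3)) 1) ≤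
      μH[2] {x : EuclideanSpace ℝ (Fin 3) | x ∈ Metric.sphere (0 : EuclideanSpace ℝ (Fin 3)) 1 ∧
        ∀ i, 1 / (10 * (k : ℝ)) ≤ |⟪x, d i⟫| ∧ |⟪x, d i⟫| ≤ 1 - 1 / (10 * (k : ℝ))} := by
  set m := μH[2] (Metric.sphere (0 : EuclideanSpace ℝ (Fin 3)) 1) with hm
  set G := {x : EuclideanSpace ℝ (Fin 3) | x ∈ Metric.sphere (0 : EuclideanSpace ℝ (Fin 3)) 1 ∧
        ∀ i, 1 / (10 * (k : ℝ)) ≤ |⟪x, d i⟫| ∧ |⟪x, d i⟫| ≤ 1 - 1 / (10 * (k : ℝ))} with hG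
  let B : Fin k → Set (EuclideanSpace ℝ (Fin 3)) := fun i =>
    {x | x ∈ Metric.sphere (0 : EuclideanSpace ℝ (Fin 3)) 1 ∧
      ¬ (1 / (10 * (k : ℝ)) ≤ |⟪x, d i⟫| ∧ |⟪x, d i⟫| ≤ 1 - 1 / (10 * (k : ℝ)))}
  have hfin : m ≠ ∞ := hausdorff_sphere_lt_top.ne
  have hcover : Metric.sphere (0 : EuclideanSpace ℝ (Fin 3)) 1 ⊆ G ∪ ⋃ i, B i := by
    intro x hx
    by_cases h : ∀ i, 1 / (10 * (k : ℝ)) ≤ |⟪x, d i⟫| ∧ |⟪x, d i⟫| ≤ 1 - 1 / (10 * (k : ℝ))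
    · exact Or.inl ⟨hx, h⟩
    · obtain ⟨i, hi⟩ := not_forall.1 h
      exact Or.inr (Set.mem_iUnion.2 ⟨i, hx, hi⟩)
  have hB : μH[2] (⋃ i, B i) ≤ 1 / 5 * m := by
    calc μH[2] (⋃ i, B i) ≤ ∑ i, μH[2] (B i) := measure_iUnion_fintype_le _ _
      _ ≤ ∑ _i : Fin k, ENNReal.ofReal (1 / (5 * (k : ℝ))) * m :=
          Finset.sum_le_sum fun i _ => hausdorff_compl_le hk (hd i)
      _ = 1 / 5 * m := by
          have hk' : (0 : ℝ) < k := by exact_mod_cast (by omega : 0 < k)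
          rw [Finset.sum_const, Finset.card_univ, Fintype.card_fin, nsmul_eq_mul, ← mul_assoc,
            ← ENNReal.ofReal_natCast, ← ENNReal.ofReal_mul hk'.le]
          congr 1
          rw [show (k : ℝ) * (1 / (5 * k)) = 1 / 5 by field_simp,
            ENNReal.ofReal_div_of_pos (by norm_num)]
          simp
  have h : 4 / 5 * m + 1 / 5 * m ≤ μH[2] G + 1 / 5 * m := by
    calc 4 / 5 * m + 1 / 5 * m = m := by
          rw [← add_mul, ENNReal.div_add_div_same, show (4 + 1 : ℝ≥0∞) = 5 by norm_num,
            ENNReal.div_self (by norm_num) (by norm_num), one_mul]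
      _ ≤ μH[2] G + μH[2] (⋃ i, B i) := (measure_mono hcover).trans (measure_union_le _ _)
      _ ≤ _ := by gcongr
  exact (ENNReal.add_le_add_iff_right
    (ENNReal.mul_ne_top (ENNReal.div_ne_top (by simp) (by norm_num)) hfin)).1 h
end

section
/- Let S ⊂ ℝ³ be a compact convex set contained in the closed ball of radius r > 0 centered at a point z. Then the 2-dimensional Hausdorff measure of the topological frontier of S is at most the 2-dimensional Hausdorff measure of the sphere {x ∈ ℝ³ : ‖x − z‖ = r}. -/
/-!
The nearest-point projection `P` onto a nonempty compact convex set `S` is `1`-Lipschitz, so it does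
not increase Hausdorff measure, and it remains to see that `P` maps the sphere onto a set containing
the frontier of `S`.

If `x ∉ S`, every point of the ray from `P x` through `x` is projected to `P x`. This ray starts
inside the closed ball and is unbounded, so it meets the sphere, and therefore `P x ∈ P '' sphere`.
A frontier point `x` of `S` is a limit of points outside `S`; as `P` is continuous, `P x = x` and
`P '' sphere` is compact, hence closed, `x` also lies in `P '' sphere`. Working with the closed image
avoids supporting hyperplanes and any distinction on whether `S` has interior points.
-/

open MeasureTheory

section Projection

variable {E : Type*} [NormedAddCommGroup E] [InnerProductSpace ℝ E]

/-- `P` is the nearest-point projection onto `S`, encoded by its variational inequality (for convex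
`S` this is equivalent to `P u` minimising the distance to `u`). -/
def IsConvexProj (S : Set E) (P : E → E) : Prop :=
  ∀ u, P u ∈ S ∧ ∀ w ∈ S, inner ℝ (u - P u) (w - P u) ≤ 0

lemma exists_isConvexProj {S : Set E} (hne : S.Nonempty) (hS : IsComplete S)
    (hconv : Convex ℝ S) : ∃ P, IsConvexProj S P := by
  have h : ∀ u : E, ∃ v, v ∈ S ∧ ∀ w ∈ S, inner ℝ (u - v) (w - v) ≤ 0 := by
    intro u
    obtain ⟨v, hv, hmin⟩ := exists_norm_eq_iInf_of_complete_convex hne hS hconv u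
    exact ⟨v, hv, (norm_eq_iInf_iff_real_inner_le_zero hconv hv).1 hmin⟩
  choose P hP using h
  exact ⟨P, hP⟩

/-- Adding the variational inequalities at `u` and `v` gives
`‖P u - P v‖ ^ 2 ≤ ⟪u - v, P u - P v⟫`. -/
lemma IsConvexProj.lipschitzWith {S : Set E} {P : E → E} (hP : IsConvexProj S P) :
    LipschitzWith 1 P := by
  refine LipschitzWith.of_dist_le_mul fun u v => ?_
  rw [NNReal.coe_one, one_mul, dist_eq_norm, dist_eq_norm]
  have h1 := (hP u).2 _ (hP v).1
  have h2 := (hP v).2 _ (hP u).1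
  have h3 : inner ℝ (u - P u) (P v - P u) + inner ℝ (v - P v) (P u - P v)
      = inner ℝ (P u - P v) (P u - P v) - inner ℝ (u - v) (P u - P v) := by
    simp only [inner_sub_left, inner_sub_right]
    ring
  rw [real_inner_self_eq_norm_sq] at h3
  have h4 := real_inner_le_norm (u - v) (P u - P v)
  by_contra! hlt
  have hpos : 0 < ‖P u - P v‖ := (norm_nonneg _).trans_lt hlt
  nlinarith [mul_lt_mul_of_pos_right hlt hpos]

/-- The projection is constant on the normal ray from `P x` through `x`. -/
lemma IsConvexProj.apply_ray {S : Set E} {P : E → E} (hP : IsConvexProj S P) (x : E) {t : ℝ}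
    (ht : 0 ≤ t) : P (P x + t • (x - P x)) = P x := by
  set q := P (P x + t • (x - P x)) with hq
  have h1 := (hP (P x + t • (x - P x))).2 _ (hP x).1
  have h2 := (hP x).2 q (hP _).1
  rw [← hq] at h1
  have h3 : inner ℝ (P x + t • (x - P x) - q) (P x - q)
      = inner ℝ (P x - q) (P x - q) - t * inner ℝ (x - P x) (q - P x) := by
    simp only [inner_sub_left, inner_sub_right, inner_add_left, real_inner_smul_left]
    ring
  rw [real_inner_self_eq_norm_sq] at h3
  have h4 := mul_nonneg ht (neg_nonneg.2 h2)
  have h5 : ‖P x - q‖ ^ 2 = 0 := le_antisymm (by linarith) (sq_nonneg _)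
  exact (sub_eq_zero.1 (norm_eq_zero.1 (pow_eq_zero_iff two_ne_zero |>.1 h5))).symm

/-- A ray starting in a closed ball meets the bounding sphere. -/
lemma exists_ray_mem_sphere {z p d : E} {r : ℝ} (hp : p ∈ Metric.closedBall z r) (hd : d ≠ 0) :
    ∃ t : ℝ, 0 ≤ t ∧ p + t • d ∈ Metric.sphere z r := by
  rw [mem_closedBall_iff_norm] at hp
  have hr : 0 ≤ r := (norm_nonneg _).trans hp
  have hd' : 0 < ‖d‖ := norm_pos_iff.2 hd
  have hT : 0 ≤ 2 * r / ‖d‖ := by positivity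
  have hcont : ContinuousOn (fun t : ℝ => ‖p + t • d - z‖) (Set.Icc 0 (2 * r / ‖d‖)) := by
    fun_prop
  have hend : r ≤ ‖p + (2 * r / ‖d‖) • d - z‖ := by
    have h1 : ‖(2 * r / ‖d‖) • d‖ = 2 * r := by
      rw [norm_smul, Real.norm_of_nonneg hT, div_mul_cancel₀ _ hd'.ne']
    have h2 : ‖(2 * r / ‖d‖) • d‖ ≤ ‖p + (2 * r / ‖d‖) • d - z‖ + ‖p - z‖ := by
      refine le_trans (le_of_eq ?_) (norm_sub_le _ _)
      congr 1
      abel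
    linarith
  obtain ⟨t, ht, hrt⟩ := intermediate_value_Icc hT hcont ⟨by simpa using hp, hend⟩
  exact ⟨t, ht.1, mem_sphere_iff_norm.2 hrt⟩

lemma IsConvexProj.frontier_subset_image_sphere {S : Set E} {P : E → E} (hP : IsConvexProj S P)
    {z : E} {r : ℝ} (hS : IsClosed S) (hsub : S ⊆ Metric.closedBall z r)
    (hcomp : IsCompact (Metric.sphere z r)) : frontier S ⊆ P '' Metric.sphere z r := by
  have hPc : Continuous P := hP.lipschitzWith.continuous
  have hout : Sᶜ ⊆ P ⁻¹' (P '' Metric.sphere z r) := by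
    intro x hx
    have hd : x - P x ≠ 0 := fun h => hx ((sub_eq_zero.1 h) ▸ (hP x).1)
    obtain ⟨t, ht, hmem⟩ := exists_ray_mem_sphere (hsub (hP x).1) hd
    exact ⟨_, hmem, hP.apply_ray x ht⟩
  have hclosed : IsClosed (P ⁻¹' (P '' Metric.sphere z r)) :=
    (hcomp.image hPc).isClosed.preimage hPc
  intro x hx
  have hxS : x ∈ S := hS.frontier_subset hx
  have hfix : P x = x := by
    have h := (hP x).2 x hxS
    rw [real_inner_self_nonpos, sub_eq_zero] at h
    exact h.symm
  have hx' : x ∈ closure Sᶜ := by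
    rw [← frontier_compl] at hx
    exact frontier_subset_closure hx
  have h : P x ∈ P '' Metric.sphere z r := closure_minimal hout hclosed hx'
  rwa [hfix] at h

end Projection

/-- Surface-area monotonicity step in Lemma 6.2 (lem:regionBoundary): a compact
convex set `S ⊆ ℝ³` contained in a closed ball of radius `r` around `z` has
boundary surface area (2-dimensional Hausdorff measure of its frontier) at most
that of the sphere of radius `r` around `z`. -/
theorem stmt_9 (S : Set (EuclideanSpace ℝ (Fin 3))) (hScomp : IsCompact S)
    (hSconv : Convex ℝ S) (z : EuclideanSpace ℝ (Fin 3)) (r : ℝ) (hr : 0 < r)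
    (hsub : S ⊆ Metric.closedBall z r) :
    μH[2] (frontier S) ≤ μH[2] (Metric.sphere z r) := by
  rcases S.eq_empty_or_nonempty with rfl | hne
  · simp
  obtain ⟨P, hP⟩ := exists_isConvexProj hne hScomp.isComplete hSconv
  calc μH[2] (frontier S) ≤ μH[2] (P '' Metric.sphere z r) :=
        measure_mono (hP.frontier_subset_image_sphere hScomp.isClosed hsub (isCompact_sphere z r))
    _ ≤ μH[2] (Metric.sphere z r) := by
        simpa using hP.lipschitzWith.hausdorffMeasure_image_le zero_le_two (Metric.sphere z r)
end

section
/- Let a, b, c ∈ ℝ³ and let y ∈ ℝ³ be a unit vector. Then |det(M)| ≤ |⟨y, a⟩|·‖b‖·‖c‖ + |⟨y, b⟩|·‖c‖·‖a‖ + |⟨y, c⟩|·‖a‖·‖b‖, where M is the 3×3 matrix whose rows are a, b, c. -/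
/-!
The cross products of the rows of `M` satisfy, for every `y`,
`det M • y = ⟨y, a⟩ • (b × c) + ⟨y, b⟩ • (c × a) + ⟨y, c⟩ • (a × b)`.
Pairing with the unit vector `y` writes `det M` as a sum of three terms of the form
`⟨y, a⟩ * ⟨y, b × c⟩`, and each triple product is bounded by `|⟨y, b × c⟩| ≤ ‖b‖ * ‖c‖`
(`abs_dot_cross_le`); the triangle inequality concludes.
-/

/-- For a unit vector `y`, `|⟨y, u × v⟩| ≤ ‖u‖ * ‖v‖`. -/
lemma abs_dot_cross_le (y u v : Fin 3 → ℝ) (hy : y 0 ^ 2 + y 1 ^ 2 + y 2 ^ 2 = 1) :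
    |y 0 * (u 1 * v 2 - u 2 * v 1) + y 1 * (u 2 * v 0 - u 0 * v 2)
        + y 2 * (u 0 * v 1 - u 1 * v 0)| ≤
      Real.sqrt (∑ i, u i ^ 2) * Real.sqrt (∑ i, v i ^ 2) := by
  rw [← Real.sqrt_mul (Finset.sum_nonneg fun i _ => sq_nonneg (u i))]
  apply Real.abs_le_sqrt
  simp only [Fin.sum_univ_three]
  -- Cauchy–Schwarz for `y` and an arbitrary vector `(p, q, r)`, in the form of Lagrange's identity.
  have cs : ∀ p q r : ℝ, (y 0 * p + y 1 * q + y 2 * r) ^ 2 ≤ p ^ 2 + q ^ 2 + r ^ 2 := by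
    intro p q r
    have h : p ^ 2 + q ^ 2 + r ^ 2 = (y 0 ^ 2 + y 1 ^ 2 + y 2 ^ 2) * (p ^ 2 + q ^ 2 + r ^ 2) := by
      rw [hy, one_mul]
    rw [h]
    linarith [sq_nonneg (y 0 * q - y 1 * p), sq_nonneg (y 0 * r - y 2 * p),
      sq_nonneg (y 1 * r - y 2 * q)]
  refine (cs _ _ _).trans ?_
  -- `‖u × v‖ ^ 2 + ⟨u, v⟩ ^ 2 = ‖u‖ ^ 2 * ‖v‖ ^ 2`.
  linarith [sq_nonneg (u 0 * v 0 + u 1 * v 1 + u 2 * v 2)]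

/-- Quantitative core of Claim 5.8 (clm:projectSum): for `a, b, c ∈ ℝ³` and a
unit vector `y`, `|det M| ≤ |⟨y,a⟩|‖b‖‖c‖ + |⟨y,b⟩|‖c‖‖a‖ + |⟨y,c⟩|‖a‖‖b‖`,
where `M` has rows `a, b, c`. -/
theorem stmt_11 (a b c y : Fin 3 → ℝ) (hy : ∑ i, y i ^ 2 = 1) :
    |(Matrix.of ![a, b, c]).det| ≤
      |∑ i, y i * a i| * Real.sqrt (∑ i, b i ^ 2) * Real.sqrt (∑ i, c i ^ 2) +
        |∑ i, y i * b i| * Real.sqrt (∑ i, c i ^ 2) * Real.sqrt (∑ i, a i ^ 2) +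
        |∑ i, y i * c i| * Real.sqrt (∑ i, a i ^ 2) * Real.sqrt (∑ i, b i ^ 2) := by
  have hy' : y 0 ^ 2 + y 1 ^ 2 + y 2 ^ 2 = 1 := by
    simpa only [Fin.sum_univ_three] using hy
  have key : (Matrix.of ![a, b, c]).det =
      (∑ i, y i * a i) * (y 0 * (b 1 * c 2 - b 2 * c 1) + y 1 * (b 2 * c 0 - b 0 * c 2)
        + y 2 * (b 0 * c 1 - b 1 * c 0)) +
      (∑ i, y i * b i) * (y 0 * (c 1 * a 2 - c 2 * a 1) + y 1 * (c 2 * a 0 - c 0 * a 2)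
        + y 2 * (c 0 * a 1 - c 1 * a 0)) +
      (∑ i, y i * c i) * (y 0 * (a 1 * b 2 - a 2 * b 1) + y 1 * (a 2 * b 0 - a 0 * b 2)
        + y 2 * (a 0 * b 1 - a 1 * b 0)) := by
    -- Homogenize: the identity is polynomial once `det M` is multiplied by `‖y‖ ^ 2 = 1`.
    rw [← mul_one (Matrix.det _), ← hy', Matrix.det_fin_three]
    simp only [Fin.sum_univ_three, Matrix.of_apply, Matrix.cons_val]
    ring
  rw [key]
  refine (abs_add_three _ _ _).trans ?_
  simp only [abs_mul, mul_assoc]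
  gcongr
  · exact abs_dot_cross_le y b c hy'
  · exact abs_dot_cross_le y c a hy'
  · exact abs_dot_cross_le y a b hy'
end

section
/- Let L, V > 0 and let a, b, c ∈ ℝ³ satisfy ‖a‖ ≤ L, ‖b‖ ≤ L, ‖c‖ ≤ L, and |det(M)| ≥ V, where M is the 3×3 matrix whose rows are a, b, c. Then for every unit vector y ∈ ℝ³: ⟨y, a⟩² + ⟨y, b⟩² + ⟨y, c⟩² ≥ V²/(3·L⁴). -/
/-!
Let `D = det M`, `p = ⟨y,a⟩`, `q = ⟨y,b⟩`, `r = ⟨y,c⟩`. Cramer's rule reads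
`D y = p (b × c) + q (c × a) + r (a × b)`. Taking squared norms, the inequality
`‖u + v + w‖² ≤ 3 (‖u‖² + ‖v‖² + ‖w‖²)` and the bound `‖b × c‖ ≤ ‖b‖ ‖c‖ ≤ L²` (and its cyclic
analogues) give `V² ≤ D² ‖y‖² ≤ 3 L⁴ (p² + q² + r²)`.
-/

/-- The cross product of two vectors of length at most `L` has length at most `L²`, by Lagrange's
identity `‖u × v‖² = ‖u‖² ‖v‖² - ⟨u,v⟩²`. -/
lemma cross_sq_le {L : ℝ} {u v : Fin 3 → ℝ}
    (hu : u 0 ^ 2 + u 1 ^ 2 + u 2 ^ 2 ≤ L ^ 2) (hv : v 0 ^ 2 + v 1 ^ 2 + v 2 ^ 2 ≤ L ^ 2) :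
    (u 1 * v 2 - u 2 * v 1) ^ 2 + (u 2 * v 0 - u 0 * v 2) ^ 2 + (u 0 * v 1 - u 1 * v 0) ^ 2
      ≤ L ^ 4 := by
  have h := mul_le_mul hu hv (by positivity) (by positivity)
  linarith [sq_nonneg (u 0 * v 0 + u 1 * v 1 + u 2 * v 2)]

lemma add_three_sq_le (x y z : ℝ) : (x + y + z) ^ 2 ≤ 3 * (x ^ 2 + y ^ 2 + z ^ 2) := by
  linarith [sq_nonneg (x - y), sq_nonneg (y - z), sq_nonneg (x - z)]

/-- **Claim 5.8 (clm:projectSum), quantitative form.** If `a, b, c ∈ ℝ³` have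
Euclidean lengths at most `L` and the matrix `M` with rows `a, b, c` satisfies
`|det M| ≥ V`, then for every unit vector `y`,
`⟨y,a⟩² + ⟨y,b⟩² + ⟨y,c⟩² ≥ V²/(3L⁴)`. -/
theorem stmt_12 (L V : ℝ) (hL : 0 < L) (hV : 0 < V) (a b c : Fin 3 → ℝ)
    (hA : Real.sqrt (∑ i, a i ^ 2) ≤ L) (hB : Real.sqrt (∑ i, b i ^ 2) ≤ L)
    (hC : Real.sqrt (∑ i, c i ^ 2) ≤ L)
    (hdet : V ≤ |(Matrix.of ![a, b, c]).det|) :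
    ∀ y : Fin 3 → ℝ, ∑ i, y i ^ 2 = 1 →
      V ^ 2 / (3 * L ^ 4) ≤
        (∑ i, y i * a i) ^ 2 + (∑ i, y i * b i) ^ 2 + (∑ i, y i * c i) ^ 2 := by
  intro y hy
  rw [Real.sqrt_le_left hL.le, Fin.sum_univ_three] at hA hB hC
  rw [Fin.sum_univ_three] at hy
  have hD : V ^ 2 ≤ (Matrix.of ![a, b, c]).det ^ 2 := by
    rw [← sq_abs (Matrix.det _)]
    gcongr
  have hDe : (Matrix.of ![a, b, c]).det = a 0 * (b 1 * c 2 - b 2 * c 1)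
      + a 1 * (b 2 * c 0 - b 0 * c 2) + a 2 * (b 0 * c 1 - b 1 * c 0) := by
    simp [Matrix.det_fin_three]
    ring
  generalize (Matrix.of ![a, b, c]).det = D at hD hDe
  obtain ⟨p, hp⟩ : ∃ p, p = ∑ i, y i * a i := ⟨_, rfl⟩
  obtain ⟨q, hq⟩ : ∃ q, q = ∑ i, y i * b i := ⟨_, rfl⟩
  obtain ⟨r, hr⟩ : ∃ r, r = ∑ i, y i * c i := ⟨_, rfl⟩
  rw [← hp, ← hq, ← hr, div_le_iff₀ (by positivity)]
  rw [Fin.sum_univ_three] at hp hq hr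
  have e0 : D * y 0 = p * (b 1 * c 2 - b 2 * c 1) + q * (c 1 * a 2 - c 2 * a 1)
      + r * (a 1 * b 2 - a 2 * b 1) := by
    rw [hDe, hp, hq, hr]; ring
  have e1 : D * y 1 = p * (b 2 * c 0 - b 0 * c 2) + q * (c 2 * a 0 - c 0 * a 2)
      + r * (a 2 * b 0 - a 0 * b 2) := by
    rw [hDe, hp, hq, hr]; ring
  have e2 : D * y 2 = p * (b 0 * c 1 - b 1 * c 0) + q * (c 0 * a 1 - c 1 * a 0)
      + r * (a 0 * b 1 - a 1 * b 0) := by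
    rw [hDe, hp, hq, hr]; ring
  have hDy : D ^ 2 = (D * y 0) ^ 2 + (D * y 1) ^ 2 + (D * y 2) ^ 2 := by
    linear_combination (-D ^ 2) * hy
  have k0 := add_three_sq_le (p * (b 1 * c 2 - b 2 * c 1)) (q * (c 1 * a 2 - c 2 * a 1))
    (r * (a 1 * b 2 - a 2 * b 1))
  have k1 := add_three_sq_le (p * (b 2 * c 0 - b 0 * c 2)) (q * (c 2 * a 0 - c 0 * a 2))
    (r * (a 2 * b 0 - a 0 * b 2))
  have k2 := add_three_sq_le (p * (b 0 * c 1 - b 1 * c 0)) (q * (c 0 * a 1 - c 1 * a 0))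
    (r * (a 0 * b 1 - a 1 * b 0))
  rw [← e0, mul_pow p, mul_pow q, mul_pow r] at k0
  rw [← e1, mul_pow p, mul_pow q, mul_pow r] at k1
  rw [← e2, mul_pow p, mul_pow q, mul_pow r] at k2
  have mp := mul_le_mul_of_nonneg_left (cross_sq_le hB hC) (sq_nonneg p)
  have mq := mul_le_mul_of_nonneg_left (cross_sq_le hC hA) (sq_nonneg q)
  have mr := mul_le_mul_of_nonneg_left (cross_sq_le hA hB) (sq_nonneg r)
  linarith
end

section
/- Let p_c, p₁, p₂, p₃ ∈ ℝ³ be such that p₁, p₂, p₃ are not collinear, and let w ∈ ℝ³ be a nonzero vector orthogonal to both p₂ − p₁ and p₃ − p₁ (a normal vector to the triangle p₁p₂p₃). Let q₁, q₂, q₃ ∈ ℝ³ be arbitrary. Then there exists a vector ω ∈ ℝ³ such that the vectors q̄_j := q_j + ω × (p_j − p_c), for j = 1, 2, 3, satisfy: (1) ⟨w, q̄₂ − q̄₁⟩ = 0 and ⟨w, q̄₃ − q̄₁⟩ = 0 (the plane through q̄₁, q̄₂, q̄₃ is parallel to the plane through p₁, p₂, p₃); and (2) q̄₂ − q̄₁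 is a scalar multiple of p₂ − p₁. -/
/-!
Write `a = p₂ - p₁`, `b = p₃ - p₁`, `u = q₂ - q₁`, `v = q₃ - q₁`. Only differences enter, so the
centre `pc` drops out, and `ω` must satisfy `u + ω × a = s a` and `⟨w, v + ω × b⟩ = 0`; the
condition `⟨w, u + ω × a⟩ = 0` then follows from `⟨w, a⟩ = 0`. By the triple product expansion
`(u × a) × a = ⟨a, u⟩ a - |a|² u`, the vector `ω₀ = |a|⁻² (u × a)` solves the first equation, and so
does `ω₀ + t a` for every real `t`. The second equation is affine in `t` with leading coefficient
`⟨w, a × b⟩`, which is nonzero because `w` and `a × b` are nonzero and parallel.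
-/

open Matrix in
/-- If the edge vectors at `p₁` have zero cross product, the triangle is degenerate. -/
lemma collinear_of_cross_eq_zero (p₁ p₂ p₃ : Fin 3 → ℝ)
    (h : crossProduct (p₂ - p₁) (p₃ - p₁) = 0) :
    Collinear ℝ ({p₁, p₂, p₃} : Set (Fin 3 → ℝ)) := by
  by_cases ha : p₂ - p₁ = 0
  · rw [sub_eq_zero.mp ha]
    simpa using collinear_pair ℝ p₁ p₃
  have haa : (p₂ - p₁) ⬝ᵥ (p₂ - p₁) ≠ 0 := fun h0 => ha (dotProduct_self_eq_zero.mp h0)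
  rw [collinear_iff_of_mem (p₀ := p₁) (by simp)]
  refine ⟨p₂ - p₁, ?_⟩
  have key : p₃ - p₁ =
      (((p₂ - p₁) ⬝ᵥ (p₃ - p₁)) / ((p₂ - p₁) ⬝ᵥ (p₂ - p₁))) • (p₂ - p₁) := by
    generalize p₂ - p₁ = a at *
    generalize p₃ - p₁ = b at *
    -- `0 = (a × b) × a = |a|² b - ⟨a, b⟩ a`
    have h1 : (a ⬝ᵥ a) • b - (a ⬝ᵥ b) • a = 0 := by
      have h2 : crossProduct (crossProduct a b) a = (a ⬝ᵥ a) • b - (a ⬝ᵥ b) • a := by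
        ext i
        fin_cases i <;> simp [cross_apply, dotProduct, Fin.sum_univ_three] <;> ring
      rw [← h2, h]
      simp
    rw [div_eq_inv_mul, mul_smul, ← sub_eq_zero.mp h1, inv_smul_smul₀ haa]
  rintro p (rfl | rfl | rfl)
  · exact ⟨0, by simp⟩
  · exact ⟨1, by simp⟩
  · exact ⟨_, by rw [← key]; simp⟩

open Matrix in
/-- A nonzero normal to both `a` and `b` is parallel to `a × b`, hence not orthogonal to it. -/
lemma dot_cross_ne_zero {a b w : Fin 3 → ℝ} (hn : crossProduct a b ≠ 0) (hw : w ≠ 0)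
    (ha : w ⬝ᵥ a = 0) (hb : w ⬝ᵥ b = 0) : w ⬝ᵥ crossProduct a b ≠ 0 := by
  intro h
  have hwn : crossProduct w (crossProduct a b) = 0 := by
    have : crossProduct w (crossProduct a b) = (w ⬝ᵥ b) • a - (w ⬝ᵥ a) • b := by
      ext i
      fin_cases i <;> simp [cross_apply, dotProduct, Fin.sum_univ_three] <;> ring
    rw [this, ha, hb]
    simp
  -- Lagrange's identity `|w × n|² = |w|² |n|² - ⟨w, n⟩²` with `n = a × b`
  have lag := cross_dot_cross w (crossProduct a b) w (crossProduct a b)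
  rw [hwn, h, zero_dotProduct, zero_mul, sub_zero] at lag
  rcases mul_eq_zero.mp lag.symm with h0 | h0
  · exact hw (dotProduct_self_eq_zero.mp h0)
  · exact hn (dotProduct_self_eq_zero.mp h0)

open Matrix in
/-- The centering problem in terms of the edge vectors `a`, `b` and the increments `u`, `v`. -/
lemma exists_centering {a b w : Fin 3 → ℝ} (u v : Fin 3 → ℝ) (ha : a ≠ 0)
    (hd : w ⬝ᵥ crossProduct a b ≠ 0) :
    ∃ (ω : Fin 3 → ℝ) (s : ℝ),
      u + crossProduct ω a = s • a ∧ w ⬝ᵥ (v + crossProduct ω b) = 0 := by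
  have haa : a ⬝ᵥ a ≠ 0 := fun h0 => ha (dotProduct_self_eq_zero.mp h0)
  set ω₀ : Fin 3 → ℝ := (a ⬝ᵥ a)⁻¹ • crossProduct u a with hω₀
  have h0 : crossProduct ω₀ a = ((a ⬝ᵥ a)⁻¹ * (a ⬝ᵥ u)) • a - u := by
    have h2 : crossProduct (crossProduct u a) a = (a ⬝ᵥ u) • a - (a ⬝ᵥ a) • u := by
      ext i
      fin_cases i <;> simp [cross_apply, dotProduct, Fin.sum_univ_three] <;> ring
    rw [hω₀, map_smul, LinearMap.smul_apply, h2, smul_sub, inv_smul_smul₀ haa, mul_smul]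
  clear_value ω₀
  refine ⟨ω₀ + (-(w ⬝ᵥ (v + crossProduct ω₀ b)) / (w ⬝ᵥ crossProduct a b)) • a,
    (a ⬝ᵥ a)⁻¹ * (a ⬝ᵥ u), ?_, ?_⟩
  · rw [map_add, map_smul, LinearMap.add_apply, LinearMap.smul_apply, cross_self, h0]
    simp
  · rw [map_add, map_smul, LinearMap.add_apply, LinearMap.smul_apply, ← add_assoc,
      dotProduct_add, dotProduct_smul, smul_eq_mul, div_mul_cancel₀ _ hd, add_neg_cancel]

/-- Existence part of **Lemma 4.1 (lem:centering)**: given a non-degenerate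
triangle `p₁p₂p₃` with normal vector `w`, an arbitrary center `p_c`, and
arbitrary `q₁, q₂, q₃ ∈ ℝ³`, there is a rotation generator `ω ∈ ℝ³` such that
the shifted vectors `q̄ⱼ = qⱼ + ω × (pⱼ − p_c)` satisfy: the plane through
`q̄₁, q̄₂, q̄₃` is parallel to the plane through `p₁, p₂, p₃` (i.e. `w` is
orthogonal to `q̄₂ − q̄₁` and `q̄₃ − q̄₁`), and `q̄₂ − q̄₁` is a scalar
multiple of `p₂ − p₁`. -/
theorem stmt_14 (pc p₁ p₂ p₃ : Fin 3 → ℝ)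
    (hcol : ¬ Collinear ℝ ({p₁, p₂, p₃} : Set (Fin 3 → ℝ)))
    (w : Fin 3 → ℝ) (hw : w ≠ 0)
    (hw1 : ∑ i, w i * (p₂ i - p₁ i) = 0) (hw2 : ∑ i, w i * (p₃ i - p₁ i) = 0)
    (q₁ q₂ q₃ : Fin 3 → ℝ) :
    ∃ ω : Fin 3 → ℝ,
      (∑ i, w i * ((q₂ + crossProduct ω (p₂ - pc)) i - (q₁ + crossProduct ω (p₁ - pc)) i)
          = 0) ∧
      (∑ i, w i * ((q₃ + crossProduct ω (p₃ - pc)) i - (q₁ + crossProduct ω (p₁ - pc)) i)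
          = 0) ∧
      ∃ s : ℝ,
        (q₂ + crossProduct ω (p₂ - pc)) - (q₁ + crossProduct ω (p₁ - pc)) =
          s • (p₂ - p₁) := by
  have hn : crossProduct (p₂ - p₁) (p₃ - p₁) ≠ 0 :=
    fun h => hcol (collinear_of_cross_eq_zero p₁ p₂ p₃ h)
  have ha : p₂ - p₁ ≠ 0 := fun h => hn (by rw [h]; simp)
  obtain ⟨ω, s, h1, h2⟩ := exists_centering (q₂ - q₁) (q₃ - q₁) ha
    (dot_cross_ne_zero hn hw hw1 hw2)
  have shift : ∀ p q : Fin 3 → ℝ,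
      (q + crossProduct ω (p - pc)) - (q₁ + crossProduct ω (p₁ - pc)) =
        (q - q₁) + crossProduct ω (p - p₁) := by
    intro p q
    simp only [map_sub]
    abel
  refine ⟨ω, ?_, ?_, s, (shift p₂ q₂).trans h1⟩
  · change dotProduct w ((q₂ + crossProduct ω (p₂ - pc)) - (q₁ + crossProduct ω (p₁ - pc))) = 0
    have hwa : dotProduct w (p₂ - p₁) = 0 := hw1
    rw [shift, h1, dotProduct_smul, hwa, smul_zero]
  · change dotProduct w ((q₃ + crossProduct ω (p₃ - pc)) - (q₁ + crossProduct ω (p₁ - pc))) = 0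
    rw [shift, h2]
end
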